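/- For every τ ∈ ℍ and every z ∈ ℂ with z ∉ Λ_τ, the τ-derivative of the Weierstrass zeta function satisfies ∂ζ/∂τ(z|τ) = (i/(4π))[℘′(z|τ) + 2(ζ(z|τ) − zη₁(τ))℘(z|τ) + 2η₁(τ)ζ(z|τ) − (1/6)z g₂(τ)]. -/

import Mathlib

open Complex Filter Topology Asymptotics

noncomputable section

/-- membership in the lattice `Λ_τ = ℤ + τℤ`. -/
def InLattice (τ z : ℂ) : Prop := ∃ m n : ℤ, z = (m : ℂ) + (n : ℂ) * τ

/-- the half-period generators `ω₀ = 0, ω₁ = 1, ω₂ = τ, ω₃ = 1 + τ`. -/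
def halfp (τ : ℂ) : Fin 4 → ℂ := ![0, 1, τ, 1 + τ]

/-- the Weierstrass elliptic function `℘(z|τ)`. -/
def wp (τ z : ℂ) : ℂ :=
  z⁻¹ ^ 2 + ∑' w : {w : ℤ × ℤ // w ≠ 0},
    ((z - ((w.1.1 : ℂ) + (w.1.2 : ℂ) * τ))⁻¹ ^ 2 - ((w.1.1 : ℂ) + (w.1.2 : ℂ) * τ)⁻¹ ^ 2)

/-- `℘′(z|τ)`, the `z`-derivative of `℘`. -/
def wpd (τ z : ℂ) : ℂ := deriv (wp τ) z

/-- `℘″(z|τ)`. -/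
def wpdd (τ z : ℂ) : ℂ := deriv (wpd τ) z

def e1 (τ : ℂ) : ℂ := wp τ (1 / 2)
def e2 (τ : ℂ) : ℂ := wp τ (τ / 2)
def e3 (τ : ℂ) : ℂ := wp τ ((1 + τ) / 2)

def g2 (τ : ℂ) : ℂ := -4 * (e1 τ * e2 τ + e1 τ * e3 τ + e2 τ * e3 τ)

/-- `zeta` is the Weierstrass zeta function: for each `τ ∈ ℍ`, `zeta τ` is odd, satisfies
`∂ζ/∂z = -℘` off the lattice, and `ζ(z|τ) - 1/z → 0` as `z → 0`. -/
def IsWeierstrassZeta (zeta : ℂ → ℂ → ℂ) : Prop :=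
  ∀ τ : ℂ, 0 < τ.im →
    (∀ z : ℂ, zeta τ (-z) = - zeta τ z) ∧
    (∀ z : ℂ, ¬ InLattice τ z → HasDerivAt (zeta τ) (- wp τ z) z) ∧
    Tendsto (fun z => zeta τ z - z⁻¹) (𝓝[≠] (0 : ℂ)) (𝓝 0)

/-- `eta1 τ = ζ(z+1|τ) - ζ(z|τ)` is the first quasi-period. -/
def IsEta1 (zeta : ℂ → ℂ → ℂ) (eta1 : ℂ → ℂ) : Prop :=
  ∀ τ : ℂ, 0 < τ.im → ∀ z : ℂ, ¬ InLattice τ z →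
    eta1 τ = zeta τ (z + 1) - zeta τ z

/-- `eta2 τ = ζ(z+τ|τ) - ζ(z|τ)` is the second quasi-period. -/
def IsEta2 (zeta : ℂ → ℂ → ℂ) (eta2 : ℂ → ℂ) : Prop :=
  ∀ τ : ℂ, 0 < τ.im → ∀ z : ℂ, ¬ InLattice τ z →
    eta2 τ = zeta τ (z + τ) - zeta τ z

/-- `sigma` is the Weierstrass sigma function: entire, odd, with
`∂/∂z log σ = ζ` off the lattice and `σ(z|τ)/z → 1` as `z → 0`. -/
def IsWeierstrassSigma (zeta sigma : ℂ → ℂ → ℂ) : Prop :=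
  ∀ τ : ℂ, 0 < τ.im →
    (∀ z : ℂ, sigma τ (-z) = - sigma τ z) ∧
    Differentiable ℂ (sigma τ) ∧
    (∀ z : ℂ, ¬ InLattice τ z → HasDerivAt (sigma τ) (zeta τ z * sigma τ z) z) ∧
    Tendsto (fun z => sigma τ z / z) (𝓝[≠] (0 : ℂ)) (𝓝 1)

/-- the Hamiltonian system (142) for `(p(τ), A(τ))` on `V`. -/
def HamSystem (n : Fin 4 → ℂ) (zeta : ℂ → ℂ → ℂ) (eta1 : ℂ → ℂ)
    (V : Set ℂ) (p A : ℂ → ℂ) : Prop :=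
  ∀ τ ∈ V,
    HasDerivAt p ((-Complex.I / (4 * (Real.pi : ℂ))) *
      (2 * A τ - zeta τ (2 * p τ) + 2 * p τ * eta1 τ)) τ ∧
    HasDerivAt A ((Complex.I / (4 * (Real.pi : ℂ))) *
      ((2 * wp τ (2 * p τ) + 2 * eta1 τ) * A τ - (3 / 2) * wpd τ (2 * p τ)
        - ∑ k : Fin 4, n k * (n k + 1) * wpd τ (p τ + halfp τ k / 2))) τ

/-- the generalized Lamé potential `I(z;τ)`. -/
def Ipot (n : Fin 4 → ℂ) (zeta : ℂ → ℂ → ℂ) (A B p τ z : ℂ) : ℂ :=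
  (∑ k : Fin 4, n k * (n k + 1) * wp τ (z + halfp τ k / 2))
    + (3 / 4) * (wp τ (z + p) + wp τ (z - p))
    + A * (zeta τ (z + p) - zeta τ (z - p)) + B

end

lemma PeriodPair.countable_lattice (L : PeriodPair) : (L.lattice : Set ℂ).Countable :=
  Set.countable_coe_iff.mp (L.latticeEquivProd.toEquiv.countable_iff.mpr inferInstance)

lemma PeriodPair.isPreconnected_compl_lattice (L : PeriodPair) :
    IsPreconnected (L.lattice : Set ℂ)ᶜ :=
  (L.countable_lattice.isPathConnected_compl_of_one_lt_rank
    (by simp [Complex.rank_real_complex])).isConnected.isPreconnected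

lemma PeriodPair.eventually_notMem_lattice (L : PeriodPair) (x : ℂ) :
    ∀ᶠ z in 𝓝[≠] x, z ∉ L.lattice := by
  have h := mem_nhdsWithin_of_mem_nhds (t := {x}ᶜ) (L.compl_lattice_sdiff_singleton_mem_nhds x)
  filter_upwards [h, self_mem_nhdsWithin] with z hz hzx hzL
  exact hz ⟨hzL, hzx⟩

/-- A function that is holomorphic off the lattice, bounded near `0` and additively quasi-periodic
is affine. -/
theorem PeriodPair.exists_affine_of_quasiperiodic (L : PeriodPair) {f : ℂ → ℂ} {y : ℂ}
    (hf : DifferentiableOn ℂ f (L.lattice : Set ℂ)ᶜ)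
    (hper : ∀ l ∈ L.lattice, ∃ c, ∀ z ∉ L.lattice, f (z + l) = f z + c)
    (h0 : Tendsto f (𝓝[≠] 0) (𝓝 y)) :
    ∃ a b, ∀ z ∉ L.lattice, f z = a * z + b := by
  classical
  choose! c hc using hper
  have hopen : IsOpen (L.lattice : Set ℂ)ᶜ := L.isClosed_lattice.isOpen_compl
  have hdense : Dense (L.lattice : Set ℂ)ᶜ := L.countable_lattice.dense_compl ℝ
  let g : ℂ → ℂ := fun z ↦ if z ∈ L.lattice then y + c z else f z
  have hgf : ∀ z ∉ L.lattice, g z = f z := fun z hz ↦ if_neg hz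
  have hgd : ∀ z ∉ L.lattice, DifferentiableAt ℂ g z := fun z hz ↦ by
    refine (hf.differentiableAt (hopen.mem_nhds hz)).congr_of_eventuallyEq ?_
    filter_upwards [hopen.mem_nhds hz] with w hw using hgf w hw
  have hg : Differentiable ℂ g := by
    intro l
    by_cases hl : l ∈ L.lattice
    swap
    · exact hgd l hl
    refine (analyticAt_of_differentiable_on_punctured_nhds_of_continuousAt ?_ ?_).differentiableAt
    · filter_upwards [L.eventually_notMem_lattice l] with z hz using hgd z hz
    · rw [continuousAt_iff_punctured_nhds]
      have h1 : Tendsto (fun z ↦ z - l) (𝓝[≠] l) (𝓝[≠] 0) := by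
        refine tendsto_nhdsWithin_iff.mpr ⟨?_, ?_⟩
        · refine tendsto_nhdsWithin_of_tendsto_nhds ?_
          simpa using (continuous_id.sub continuous_const).tendsto (f := fun z : ℂ ↦ z - l) l
        · filter_upwards [self_mem_nhdsWithin] with z hz using sub_ne_zero.mpr hz
      have h2 := (h0.comp h1).add_const (c l)
      simp only [g, if_pos hl]
      refine h2.congr' ?_
      filter_upwards [L.eventually_notMem_lattice l] with z hz
      have hz' : z - l ∉ L.lattice := fun h ↦ hz (by simpa using add_mem h hl)
      have := hc l hl _ hz'
      rw [if_neg hz]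
      simpa using this.symm
  have hg' : Differentiable ℂ (deriv g) := fun z ↦ (hg.analyticAt z).deriv.differentiableAt
  have hper' : ∀ z w, w ∈ L.lattice → deriv g (z + w) = deriv g z := by
    intro z w hw
    refine congrFun (Continuous.ext_on hdense (hg'.continuous.comp (continuous_add_const w))
      hg'.continuous fun z hz ↦ ?_) z
    have : (fun x ↦ g (x + w)) =ᶠ[𝓝 z] fun x ↦ g x + c w := by
      filter_upwards [hopen.mem_nhds hz] with x hx
      have hx' : x + w ∉ L.lattice := fun h ↦ hx (by simpa using sub_mem h hw)
      rw [hgf _ hx, hgf _ hx', hc w hw x hx]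
    have := this.deriv_eq
    rwa [deriv_comp_add_const, deriv_add_const] at this
  have hconst : ∀ z, deriv g z = deriv g 0 := fun z ↦
    hg'.apply_eq_apply_of_bounded (IsZLattice.isCompact_range_of_periodic L.lattice _
      hg'.continuous hper').isBounded z 0
  refine ⟨deriv g 0, g 0, fun z hz ↦ ?_⟩
  have hd : Differentiable ℂ fun z ↦ g z - deriv g 0 * z := by fun_prop
  have := is_const_of_deriv_eq_zero hd (fun x ↦ ?_) z 0
  · rw [hgf z hz] at this
    linear_combination this
  · rw [deriv_fun_sub (hg x) (by fun_prop)]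
    simp [hconst x]

/-- Integration of little-o estimates of the derivative at `0`. -/
lemma isLittleO_pow_succ_of_deriv {f f' : ℂ → ℂ} {k : ℕ} (h0 : f 0 = 0)
    (hf : ∀ᶠ z in 𝓝 0, HasDerivAt f (f' z) z) (hf' : f' =o[𝓝 0] fun z ↦ z ^ k) :
    f =o[𝓝 0] fun z ↦ z ^ (k + 1) := by
  rw [isLittleO_iff]
  intro ε hε
  obtain ⟨r, hr, hball⟩ := Metric.eventually_nhds_iff_ball.mp (hf.and (hf'.def hε))
  filter_upwards [Metric.ball_mem_nhds 0 hr] with z hz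
  have hsub : Metric.closedBall (0 : ℂ) ‖z‖ ⊆ Metric.ball 0 r :=
    Metric.closedBall_subset_ball (by simpa using hz)
  have := (convex_closedBall (0 : ℂ) ‖z‖).norm_image_sub_le_of_norm_hasDerivWithin_le
    (f := f) (f' := f') (C := ε * ‖z‖ ^ k) (x := 0) (y := z)
    (fun x hx ↦ (hball x (hsub hx)).1.hasDerivWithinAt) (fun x hx ↦ ?_) (by simp) (by simp)
  · simpa [h0, pow_succ, mul_assoc] using this
  · refine (hball x (hsub hx)).2.trans ?_
    rw [norm_pow]
    gcongr
    simpa using hx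

namespace PeriodPair

lemma hasDerivAt_weierstrassP (L : PeriodPair) {z : ℂ} (hz : z ∉ L.lattice) :
    HasDerivAt L.weierstrassP (L.derivWeierstrassP z) z := by
  rw [← L.deriv_weierstrassP]
  exact (L.differentiableOn_weierstrassP.differentiableAt
    (L.isClosed_lattice.isOpen_compl.mem_nhds hz)).hasDerivAt

lemma tendsto_sq_mul_weierstrassP (L : PeriodPair) :
    Tendsto (fun z ↦ z ^ 2 * L.weierstrassP z) (𝓝[≠] 0) (𝓝 1) := by
  have h1 : ContinuousAt (fun z ↦ z ^ 2 * L.weierstrassPExcept 0 z + 1) 0 :=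
    ((continuousAt_id.pow 2).mul (L.analyticAt_weierstrassPExcept 0).continuousAt).add
      continuousAt_const
  have h2 := h1.tendsto.mono_left (nhdsWithin_le_nhds (s := {0}ᶜ))
  simp only [ne_eq, OfNat.ofNat_ne_zero, not_false_eq_true, zero_pow, zero_mul, zero_add] at h2
  refine h2.congr' ?_
  filter_upwards [self_mem_nhdsWithin] with z hz
  have hz : z ≠ 0 := hz
  have := L.weierstrassPExcept_add 0 z
  simp only [ZeroMemClass.coe_zero, sub_zero] at this
  rw [← this]
  field_simp
  simp

lemma derivWeierstrassP_half (L : PeriodPair) {h : ℂ} (hh : h + h ∈ L.lattice) :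
    L.derivWeierstrassP h = 0 := by
  rw [← CharZero.eq_neg_self_iff, ← L.derivWeierstrassP_neg]
  simpa using L.derivWeierstrassP_add_coe (-h) ⟨_, hh⟩

/-- If `L'` is generated by `L` and the half-period `h` of `L`, then `℘` takes the value `℘ h`
only at points of `L'`. -/
lemma weierstrassP_ne_of_notMem (L L' : PeriodPair) {h u : ℂ} (hh : h ∉ L.lattice)
    (h2 : h + h ∈ L.lattice)
    (hL' : ∀ z, z ∈ L'.lattice ↔ z ∈ L.lattice ∨ z + h ∈ L.lattice) (hu : u ∉ L'.lattice) :
    L.weierstrassP u ≠ L.weierstrassP h := by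
  set e := L.weierstrassP h
  let f : ℂ → ℂ := fun z ↦ (L.weierstrassP (z + h) - e) * (L.weierstrassP z - e)
  have hhL' : h ∈ L'.lattice := (hL' h).2 (.inr h2)
  have hn1 : ∀ z ∉ L'.lattice, z ∉ L.lattice := fun z hz hz' ↦ hz ((hL' z).2 (.inl hz'))
  have hn2 : ∀ z ∉ L'.lattice, z + h ∉ L.lattice := fun z hz hz' ↦ hz ((hL' z).2 (.inr hz'))
  have hd1 : DifferentiableOn ℂ (fun z ↦ L.weierstrassP (z + h) - e) (L'.lattice : Set ℂ)ᶜ :=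
    fun z hz ↦ (((L.hasDerivAt_weierstrassP (hn2 z hz)).comp_add_const z h).sub_const
      e).differentiableAt.differentiableWithinAt
  have hd2 : DifferentiableOn ℂ (fun z ↦ L.weierstrassP z - e) (L'.lattice : Set ℂ)ᶜ :=
    fun z hz ↦ ((L.hasDerivAt_weierstrassP (hn1 z hz)).sub_const
      e).differentiableAt.differentiableWithinAt
  have hshift : ∀ z, ∀ l, l + h ∈ L.lattice → L.weierstrassP (z + l) = L.weierstrassP (z + h) := by
    intro z l hl
    have e1 := L.weierstrassP_add_coe (z - h) ⟨_, hl⟩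
    have e2 := L.weierstrassP_add_coe (z - h) ⟨_, h2⟩
    simp only at e1 e2
    rw [show z - h + (l + h) = z + l by ring] at e1
    rw [show z - h + (h + h) = z + h by ring] at e2
    rw [e1, e2]
  have hfper : ∀ l ∈ L'.lattice, ∀ z, f (z + l) = f z := by
    intro l hl z
    rcases (hL' l).1 hl with hl | hl
    · have e1 := L.weierstrassP_add_coe (z + h) ⟨_, hl⟩
      have e2 := L.weierstrassP_add_coe z ⟨_, hl⟩
      simp only at e1 e2
      simp only [f, e2, add_right_comm z l h, e1]
    · have e1 := L.weierstrassP_add_coe z ⟨_, hl⟩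
      simp only at e1
      simp only [f, hshift z l hl, add_assoc z l h, e1]
      ring
  have hnear : ∀ᶠ z in 𝓝 (0 : ℂ), z + h ∉ L.lattice := by
    have : Tendsto (fun z : ℂ ↦ z + h) (𝓝 0) (𝓝 h) := by
      simpa using (continuous_add_const h).tendsto 0
    exact this.eventually (L.isClosed_lattice.isOpen_compl.mem_nhds hh)
  have hlim1 : ∃ k, Tendsto (fun z ↦ (L.weierstrassP (z + h) - e) / z ^ 2) (𝓝[≠] 0) (𝓝 k) := by
    set k := deriv L.derivWeierstrassP h
    have hk : HasDerivAt (fun z ↦ L.derivWeierstrassP (z + h)) k 0 := by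
      refine HasDerivAt.comp_add_const 0 h ?_
      rw [zero_add]
      exact (L.differentiableOn_derivWeierstrassP.differentiableAt
        (L.isClosed_lattice.isOpen_compl.mem_nhds hh)).hasDerivAt
    have hk' := hasDerivAt_iff_isLittleO.mp hk
    simp only [zero_add, L.derivWeierstrassP_half h2, sub_zero, smul_eq_mul] at hk'
    have := isLittleO_pow_succ_of_deriv (k := 1)
      (f := fun z ↦ L.weierstrassP (z + h) - e - k / 2 * z ^ 2)
      (f' := fun z ↦ L.derivWeierstrassP (z + h) - z * k) (by simp [e]) ?_ (by simpa using hk')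
    · refine ⟨k / 2, ?_⟩
      have h3 := (this.tendsto_div_nhds_zero.mono_left (nhdsWithin_le_nhds (s := {0}ᶜ))).add_const
        (k / 2)
      rw [zero_add] at h3
      refine h3.congr' ?_
      filter_upwards [self_mem_nhdsWithin] with z hz
      have hz : z ≠ 0 := hz
      field_simp
      ring
    · filter_upwards [hnear] with z hz
      have := (((L.hasDerivAt_weierstrassP hz).comp_add_const z h).sub_const e).sub
        ((hasDerivAt_pow 2 z).const_mul (k / 2))
      convert! this using 1
      simp
      ring
  have hlim2 : Tendsto (fun z ↦ z ^ 2 * (L.weierstrassP z - e)) (𝓝[≠] 0) (𝓝 1) := by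
    have h1 : Tendsto (fun z : ℂ ↦ z ^ 2 * e) (𝓝[≠] 0) (𝓝 0) := by
      refine Tendsto.mono_left ?_ nhdsWithin_le_nhds
      have : Continuous fun z : ℂ ↦ z ^ 2 * e := by fun_prop
      simpa using this.tendsto 0
    simpa [mul_sub] using L.tendsto_sq_mul_weierstrassP.sub h1
  obtain ⟨k, hk⟩ := hlim1
  have hf0 : Tendsto f (𝓝[≠] 0) (𝓝 (k * 1)) := by
    refine (hk.mul hlim2).congr' ?_
    filter_upwards [self_mem_nhdsWithin] with z hz
    have hz : z ≠ 0 := hz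
    simp only [f]
    field_simp
  obtain ⟨a, b, hab⟩ := L'.exists_affine_of_quasiperiodic (hd1.mul hd2)
    (fun l hl ↦ ⟨0, fun z _ ↦ by simpa using hfper l hl z⟩) hf0
  have ha : a = 0 := by
    have hω := L'.ω₁_mem_lattice
    have h1 := hab _ L'.ω₁_div_two_notMem_lattice
    have h2 := hab (L'.ω₁ / 2 + L'.ω₁) fun h ↦ L'.ω₁_div_two_notMem_lattice
      (by simpa using sub_mem h hω)
    have h3 : f (L'.ω₁ / 2 + L'.ω₁) = f (L'.ω₁ / 2) := hfper _ hω _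
    simp only [f] at h3
    simp only [Pi.mul_apply] at h1 h2
    rw [h1, h2] at h3
    have h4 : a * L'.ω₁ = 0 := by linear_combination h3
    exact (mul_eq_zero.mp h4).resolve_right (L'.indep.ne_zero 0)
  intro hue
  have hb : b = 0 := by
    have := hab u hu
    simp only [Pi.mul_apply] at this
    rw [hue, ha] at this
    simpa [eq_comm] using this
  have hopen : IsOpen (L'.lattice : Set ℂ)ᶜ := L'.isClosed_lattice.isOpen_compl
  have hzero : ∀ z ∉ L'.lattice, L.weierstrassP z - e = 0 := by
    rcases AnalyticOnNhd.eq_zero_or_eq_zero_of_mul_eq_zero (hd1.analyticOnNhd hopen)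
      (hd2.analyticOnNhd hopen) (fun z hz ↦ by simpa [ha, hb] using hab z hz)
      L'.isPreconnected_compl_lattice with h1 | h1
    · intro z hz
      have := h1 (z - h) fun h' ↦ hz (by simpa using add_mem h' hhL')
      simpa using this
    · exact h1
  refine one_ne_zero (tendsto_nhds_unique hlim2 (tendsto_const_nhds.congr' ?_))
  filter_upwards [L'.eventually_notMem_lattice 0] with z hz
  rw [hzero z hz, mul_zero]

end PeriodPair

/-- Vieta's formula for three distinct roots of `4 X ^ 3 - a X - b`. -/
lemma eq_neg_four_mul_of_roots {x y z a b : ℂ} (hxy : x ≠ y) (hxz : x ≠ z) (hyz : y ≠ z)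
    (hx : 4 * x ^ 3 - a * x - b = 0) (hy : 4 * y ^ 3 - a * y - b = 0)
    (hz : 4 * z ^ 3 - a * z - b = 0) : a = -4 * (x * y + x * z + y * z) := by
  have h1 : 4 * (x ^ 2 + x * y + y ^ 2) = a :=
    mul_left_cancel₀ (sub_ne_zero.mpr hxy) (by linear_combination hx - hy)
  have h2 : 4 * (x ^ 2 + x * z + z ^ 2) = a :=
    mul_left_cancel₀ (sub_ne_zero.mpr hxz) (by linear_combination hx - hz)
  have h3 : x + y + z = 0 :=
    mul_left_cancel₀ (sub_ne_zero.mpr hyz) (by linear_combination (h1 - h2) / 4)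
  linear_combination -h1 + 4 * (x + y) * h3

/-- The period pair `(a, b)` with `a` real. -/
def realPeriodPair (a : ℝ) (b : ℂ) (ha : a ≠ 0) (hb : b.im ≠ 0) : PeriodPair where
  ω₁ := a
  ω₂ := b
  indep := by
    rw [LinearIndependent.pair_iff]
    intro s t hst
    have h1 := congrArg Complex.im hst
    have h2 := congrArg Complex.re hst
    have ht : t = 0 := by simpa [hb] using h1
    refine ⟨?_, ht⟩
    simpa [ht, ha] using h2

lemma notMem_realPeriodPair {a : ℝ} {b : ℂ} (ha : a ≠ 0) (hb : b.im ≠ 0) (α β : ℚ)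
    {u : ℂ} (hu : u = α * a + β * b) (h : α.den ≠ 1 ∨ β.den ≠ 1) :
    u ∉ (realPeriodPair a b ha hb).lattice := by
  have := ((realPeriodPair a b ha hb).mul_ω₁_add_mul_ω₂_mem_lattice (α := α) (β := β)).not.mpr
    (by tauto)
  simpa [realPeriodPair, hu] using this

theorem realPeriodPair_g₂_eq (τ : ℂ) (hτ : τ.im ≠ 0) :
    let L := realPeriodPair 1 τ one_ne_zero hτ
    L.g₂ = -4 * (L.weierstrassP (1 / 2) * L.weierstrassP (τ / 2)
      + L.weierstrassP (1 / 2) * L.weierstrassP ((1 + τ) / 2)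
      + L.weierstrassP (τ / 2) * L.weierstrassP ((1 + τ) / 2)) := by
  intro L
  have hτ2 : (τ / 2).im ≠ 0 := by simpa using hτ
  have hmem : ∀ z, z ∈ L.lattice ↔ ∃ m n : ℤ, m + n * τ = z := fun z ↦ by
    simp [PeriodPair.mem_lattice, L, realPeriodPair]
  have n1 : (1 / 2 : ℂ) ∉ L.lattice := by
    exact notMem_realPeriodPair one_ne_zero hτ (1 / 2) 0 (by push_cast; ring) (by norm_num)
  have n2 : τ / 2 ∉ L.lattice := by
    exact notMem_realPeriodPair one_ne_zero hτ 0 (1 / 2) (by push_cast; ring) (by norm_num)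
  have n3 : (1 + τ) / 2 ∉ L.lattice := by
    exact notMem_realPeriodPair one_ne_zero hτ (1 / 2) (1 / 2) (by push_cast; ring) (by norm_num)
  have p1 : (1 / 2 + 1 / 2 : ℂ) ∈ L.lattice := (hmem _).2 ⟨1, 0, by norm_num⟩
  have p2 : τ / 2 + τ / 2 ∈ L.lattice := (hmem _).2 ⟨0, 1, by push_cast; ring⟩
  have p3 : (1 + τ) / 2 + (1 + τ) / 2 ∈ L.lattice := (hmem _).2 ⟨1, 1, by push_cast; ring⟩
  have root : ∀ h, h ∉ L.lattice → h + h ∈ L.lattice →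
      4 * L.weierstrassP h ^ 3 - L.g₂ * L.weierstrassP h - L.g₃ = 0 := fun h h1 h2 ↦ by
    rw [← L.derivWeierstrassP_sq h h1, L.derivWeierstrassP_half h2]
    simp
  let L₁ := realPeriodPair (1 / 2) τ (by norm_num) hτ
  have hL₁ : ∀ z, z ∈ L₁.lattice ↔ z ∈ L.lattice ∨ z + 1 / 2 ∈ L.lattice := fun z ↦ by
    simp only [hmem, PeriodPair.mem_lattice, L₁, realPeriodPair]
    constructor
    · rintro ⟨m, n, rfl⟩
      rcases Int.even_or_odd' m with ⟨k, rfl | rfl⟩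
      · exact .inl ⟨k, n, by push_cast; ring⟩
      · exact .inr ⟨k + 1, n, by push_cast; ring⟩
    · rintro (⟨m, n, rfl⟩ | ⟨m, n, h⟩)
      · exact ⟨2 * m, n, by push_cast; ring⟩
      · exact ⟨2 * m - 1, n, by push_cast; linear_combination h⟩
  let L₂ := realPeriodPair 1 (τ / 2) one_ne_zero hτ2
  have hL₂ : ∀ z, z ∈ L₂.lattice ↔ z ∈ L.lattice ∨ z + τ / 2 ∈ L.lattice := fun z ↦ by
    simp only [hmem, PeriodPair.mem_lattice, L₂, realPeriodPair]
    constructor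
    · rintro ⟨m, n, rfl⟩
      rcases Int.even_or_odd' n with ⟨k, rfl | rfl⟩
      · exact .inl ⟨m, k, by push_cast; ring⟩
      · exact .inr ⟨m, k + 1, by push_cast; ring⟩
    · rintro (⟨m, n, rfl⟩ | ⟨m, n, h⟩)
      · exact ⟨m, 2 * n, by push_cast; ring⟩
      · exact ⟨m, 2 * n - 1, by push_cast; linear_combination h⟩
  refine eq_neg_four_mul_of_roots ?_ ?_ ?_ (root _ n1 p1) (root _ n2 p2) (root _ n3 p3)
  · refine (L.weierstrassP_ne_of_notMem L₁ n1 p1 hL₁ ?_).symm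
    exact notMem_realPeriodPair (a := 1 / 2) (by norm_num) hτ 0 (1 / 2) (by push_cast; ring)
      (by norm_num)
  · refine (L.weierstrassP_ne_of_notMem L₁ n1 p1 hL₁ ?_).symm
    exact notMem_realPeriodPair (a := 1 / 2) (by norm_num) hτ 1 (1 / 2) (by push_cast; ring)
      (by norm_num)
  · refine (L.weierstrassP_ne_of_notMem L₂ n2 p2 hL₂ ?_).symm
    exact notMem_realPeriodPair one_ne_zero hτ2 (1 / 2) 1 (by push_cast; ring) (by norm_num)

/-- The period pair `(1, τ)`. -/
abbrev tauPeriodPair (τ : ℂ) (hτ : 0 < τ.im) : PeriodPair :=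
  realPeriodPair 1 τ one_ne_zero hτ.ne'

/-- The element of `ℤ + τℤ` with coordinates `p`. -/
def latticePoint (τ : ℂ) (p : ℤ × ℤ) : ℂ := p.1 + p.2 * τ

lemma inLattice_iff (τ z : ℂ) : InLattice τ z ↔ ∃ p, z = latticePoint τ p := by
  simp [InLattice, latticePoint]

lemma inLattice_iff_mem_lattice (τ : ℂ) (hτ : 0 < τ.im) (z : ℂ) :
    InLattice τ z ↔ z ∈ (tauPeriodPair τ hτ).lattice := by
  simp [PeriodPair.mem_lattice, realPeriodPair, InLattice, eq_comm]

lemma hasSum_weierstrassPExcept_zero (τ : ℂ) (hτ : 0 < τ.im) (z : ℂ) :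
    HasSum (fun p : {p : ℤ × ℤ // p ≠ 0} ↦
      (z - latticePoint τ p)⁻¹ ^ 2 - (latticePoint τ p)⁻¹ ^ 2)
      ((tauPeriodPair τ hτ).weierstrassPExcept 0 z) := by
  set L := tauPeriodPair τ hτ
  have h := L.hasSum_weierstrassPExcept 0 z
  rw [← L.latticeEquivProd.symm.toEquiv.hasSum_iff] at h
  have key := hasSum_subtype_iff_indicator (s := {p : ℤ × ℤ | p ≠ 0})
    (f := fun p : ℤ × ℤ ↦ (z - latticePoint τ p)⁻¹ ^ 2 - (latticePoint τ p)⁻¹ ^ 2)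
    (a := L.weierstrassPExcept 0 z)
  refine key.mpr ?_
  convert h using 1
  ext p
  have hp : (L.latticeEquivProd.symm p).1 = latticePoint τ p := by
    rw [L.latticeEquiv_symm_apply]
    simp [L, realPeriodPair, latticePoint]
  have h0 : (L.latticeEquivProd.symm p).1 = 0 ↔ p = 0 := by simp
  by_cases h1 : p = 0
  · subst h1; simp
  · simp only [Function.comp_apply, LinearEquiv.coe_toEquiv, Set.indicator, Set.mem_ofPred_eq]
    rw [if_pos h1, if_neg (by rw [h0]; exact h1), hp]
    simp

lemma wp_eq_add (τ : ℂ) (hτ : 0 < τ.im) (z : ℂ) :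
    wp τ z = z⁻¹ ^ 2 + (tauPeriodPair τ hτ).weierstrassPExcept 0 z := by
  rw [← (hasSum_weierstrassPExcept_zero τ hτ z).tsum_eq]
  rfl

lemma wp_eq_weierstrassP (τ : ℂ) (hτ : 0 < τ.im) : wp τ = (tauPeriodPair τ hτ).weierstrassP := by
  ext z
  have := (tauPeriodPair τ hτ).weierstrassPExcept_add 0 z
  rw [wp_eq_add τ hτ, ← this]
  simp
  ring

lemma wpd_eq_derivWeierstrassP (τ : ℂ) (hτ : 0 < τ.im) :
    wpd τ = (tauPeriodPair τ hτ).derivWeierstrassP := by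
  ext z
  rw [wpd, wp_eq_weierstrassP τ hτ, PeriodPair.deriv_weierstrassP]

lemma g2_eq_G_four (τ : ℂ) (hτ : 0 < τ.im) : g2 τ = 60 * (tauPeriodPair τ hτ).G 4 := by
  rw [g2, e1, e2, e3, wp_eq_weierstrassP τ hτ]
  exact (realPeriodPair_g₂_eq τ hτ.ne').symm

lemma norm_vec_eq_norm_pair (a b : ℤ) : ‖![a, b]‖ = ‖(a, b)‖ := by
  rw [EisensteinSeries.norm_eq_max_natAbs, Prod.norm_def, Int.norm_eq_abs, Int.norm_eq_abs]
  simp [Nat.cast_natAbs]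

lemma summable_norm_pow_three_inv :
    Summable fun p : {p : ℤ × ℤ // p ≠ 0} ↦ (‖p.1‖ ^ 3)⁻¹ := by
  have h := EisensteinSeries.summable_one_div_norm_rpow (k := 3) (by norm_num)
  rw [← (finTwoArrowEquiv ℤ).symm.summable_iff] at h
  have h' : Summable fun p : ℤ × ℤ ↦ (‖p‖ ^ 3)⁻¹ := by
    refine h.congr fun p ↦ ?_
    have : ‖(finTwoArrowEquiv ℤ).symm p‖ = ‖p‖ := norm_vec_eq_norm_pair p.1 p.2
    rw [Function.comp_apply, this, Real.rpow_neg (norm_nonneg _)]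
    norm_cast
  exact h'.comp_injective Subtype.val_injective

lemma exists_mul_norm_le_norm_latticePoint {τ : ℂ} (hτ : 0 < τ.im) :
    ∃ c > 0, ∀ p, c * ‖p‖ ≤ ‖latticePoint τ p‖ := by
  refine ⟨EisensteinSeries.r ⟨τ, hτ⟩, EisensteinSeries.r_pos _, fun p ↦ ?_⟩
  by_cases hp : p = 0
  · simp [hp]
  · have := EisensteinSeries.r_mul_max_le ⟨τ, hτ⟩ (x := ![p.2, p.1]) (by
      contrapose! hp
      exact Prod.ext (congrFun hp 1) (congrFun hp 0))
    convert! this using 1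
    · rw [norm_vec_eq_norm_pair, Prod.norm_def, Prod.norm_def, max_comm]
    · simp [latticePoint, add_comm]

lemma one_le_norm_of_ne_zero {p : ℤ × ℤ} (hp : p ≠ 0) : 1 ≤ ‖p‖ := by
  rw [Prod.norm_def, le_max_iff]
  by_contra! h
  simp only [Int.norm_eq_abs] at h
  norm_cast at h
  exact hp (Prod.ext (Int.abs_lt_one_iff.mp h.1) (Int.abs_lt_one_iff.mp h.2))

lemma exists_mul_norm_le_norm_sub_latticePoint {τ : ℂ} (hτ : 0 < τ.im) {z : ℂ}
    (hz : ∀ p ≠ 0, z ≠ latticePoint τ p) :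
    ∃ c > 0, ∀ p, c * ‖p‖ ≤ ‖z - latticePoint τ p‖ := by
  obtain ⟨c, hc, h⟩ := exists_mul_norm_le_norm_latticePoint hτ
  have hO : (fun p : ℤ × ℤ ↦ p) =O[cofinite] fun p ↦ z - latticePoint τ p := by
    refine IsBigO.of_bound (2 / c) ?_
    have : ∀ᶠ p : ℤ × ℤ in cofinite, 2 * ‖z‖ / c ≤ ‖p‖ := by
      rw [← cocompact_eq_cofinite]
      exact (tendsto_norm_cocompact_atTop (E := ℤ × ℤ)).eventually_ge_atTop _
    filter_upwards [this] with p hp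
    rw [div_le_iff₀ hc] at hp
    have h1 := norm_sub_norm_le (latticePoint τ p) z
    rw [norm_sub_rev] at h1
    rw [div_mul_eq_mul_div, le_div_iff₀ hc]
    linarith [h p]
  rw [isBigO_cofinite_iff fun p hp ↦ by
    by_contra h
    exact hz p h (sub_eq_zero.mp hp)] at hO
  obtain ⟨C, hC⟩ := hO
  refine ⟨(max C 1)⁻¹, by positivity, fun p ↦ ?_⟩
  rw [inv_mul_le_iff₀ (by positivity)]
  exact (hC p).trans (by gcongr; exact le_max_left _ _)

/-- Locally uniform comparison of `z - ω` and of `ω` with the coordinates of the lattice point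
`ω ≠ 0`. -/
lemma exists_uniform_lower_bound {τ : ℂ} (hτ : 0 < τ.im) {z : ℂ}
    (hz : ∀ p ≠ 0, z ≠ latticePoint τ p) :
    ∃ δ > 0, ∃ r > 0, ∀ t ∈ Metric.ball τ r, ∀ w ∈ Metric.ball z r, ∀ p ≠ 0,
      δ * ‖p‖ ≤ ‖latticePoint t p‖ ∧ δ * ‖p‖ ≤ ‖w - latticePoint t p‖ := by
  obtain ⟨c, hc, h⟩ := exists_mul_norm_le_norm_latticePoint hτ
  obtain ⟨d, hd, h'⟩ := exists_mul_norm_le_norm_sub_latticePoint hτ hz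
  set e := min c d
  have he : 0 < e := lt_min hc hd
  refine ⟨e / 2, by positivity, e / 4, by positivity, fun t ht w hw p hp ↦ ?_⟩
  rw [mem_ball_iff_norm] at ht hw
  have hp1 := one_le_norm_of_ne_zero hp
  have hd1 : ‖latticePoint t p - latticePoint τ p‖ ≤ e / 4 * ‖p‖ := by
    have : latticePoint t p - latticePoint τ p = p.2 * (t - τ) := by
      simp only [latticePoint]; ring
    rw [this, norm_mul, mul_comm]
    gcongr
    rw [Complex.norm_intCast, ← Int.norm_eq_abs]
    exact norm_snd_le p
  have hcp : e * ‖p‖ ≤ ‖latticePoint τ p‖ := le_trans (by gcongr; exact min_le_left _ _) (h p)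
  have hdp : e * ‖p‖ ≤ ‖z - latticePoint τ p‖ := le_trans (by gcongr; exact min_le_right _ _) (h' p)
  constructor
  · have := norm_sub_norm_le (latticePoint τ p) (latticePoint τ p - latticePoint t p)
    rw [sub_sub_cancel, norm_sub_rev] at this
    nlinarith
  · have h3 := norm_add₃_le (a := w - latticePoint t p) (b := z - w)
      (c := latticePoint t p - latticePoint τ p)
    rw [show w - latticePoint t p + (z - w) + (latticePoint t p - latticePoint τ p)
      = z - latticePoint τ p by ring, norm_sub_rev z w] at h3
    nlinarith

/-- The summand of the Weierstrass zeta function attached to the lattice point `ω`. -/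
noncomputable def zetaTerm (ω z : ℂ) : ℂ := (z - ω)⁻¹ + ω⁻¹ + z * ω⁻¹ ^ 2

/-- The derivative of `zetaTerm` with respect to the lattice point. -/
noncomputable def zetaTermDeriv (ω z : ℂ) : ℂ := (z - ω)⁻¹ ^ 2 - ω⁻¹ ^ 2 - 2 * z * ω⁻¹ ^ 3

section terms

variable {ω z : ℂ} {y : ℝ}

lemma norm_zetaTerm_le (hω : ω ≠ 0) (hz : z - ω ≠ 0) (h1 : ‖ω⁻¹‖ ≤ y) (h2 : ‖(z - ω)⁻¹‖ ≤ y) :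
    ‖zetaTerm ω z‖ ≤ ‖z‖ ^ 2 * y ^ 3 := by
  have h : zetaTerm ω z = z ^ 2 * (ω⁻¹ ^ 2 * (z - ω)⁻¹) := by
    rw [zetaTerm]; field_simp; ring
  rw [h, norm_mul, norm_mul, norm_pow, norm_pow, pow_succ y]
  gcongr

lemma norm_inv_sq_sub_le (hω : ω ≠ 0) (hz : z - ω ≠ 0) (h1 : ‖ω⁻¹‖ ≤ y)
    (h2 : ‖(z - ω)⁻¹‖ ≤ y) : ‖(z - ω)⁻¹ ^ 2 - ω⁻¹ ^ 2‖ ≤ 2 * ‖z‖ * y ^ 3 := by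
  have h : (z - ω)⁻¹ ^ 2 - ω⁻¹ ^ 2 =
      z * (ω⁻¹ * (z - ω)⁻¹ ^ 2) - z * (ω⁻¹ ^ 2 * (z - ω)⁻¹) := by
    field_simp; ring
  have hy : 0 ≤ y := (norm_nonneg _).trans h1
  rw [h]
  refine (norm_sub_le _ _).trans ?_
  rw [norm_mul, norm_mul, norm_mul, norm_mul, norm_pow, norm_pow]
  calc _ ≤ ‖z‖ * (y * y ^ 2) + ‖z‖ * (y ^ 2 * y) := by gcongr
    _ = _ := by ring

lemma norm_zetaTermDeriv_le (hω : ω ≠ 0) (hz : z - ω ≠ 0) (h1 : ‖ω⁻¹‖ ≤ y)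
    (h2 : ‖(z - ω)⁻¹‖ ≤ y) : ‖zetaTermDeriv ω z‖ ≤ 3 * ‖z‖ ^ 2 * y ^ 4 := by
  have h : zetaTermDeriv ω z =
      z ^ 2 * (ω⁻¹ ^ 2 * (z - ω)⁻¹ ^ 2) - 2 * (z ^ 2 * (ω⁻¹ ^ 3 * (z - ω)⁻¹)) := by
    rw [zetaTermDeriv]; field_simp; ring
  have hy : 0 ≤ y := (norm_nonneg _).trans h1
  rw [h]
  refine (norm_sub_le _ _).trans ?_
  simp only [norm_mul, norm_pow, Complex.norm_ofNat]
  calc _ ≤ ‖z‖ ^ 2 * (y ^ 2 * y ^ 2) + 2 * (‖z‖ ^ 2 * (y ^ 3 * y)) := by gcongr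
    _ = _ := by ring

end terms

lemma exists_uniform_inv_bound {τ : ℂ} (hτ : 0 < τ.im) {z : ℂ}
    (hz : ∀ p ≠ 0, z ≠ latticePoint τ p) :
    ∃ C > 0, ∃ r > 0, ∀ t ∈ Metric.ball τ r, ∀ w ∈ Metric.ball z r,
      ∀ p : {p : ℤ × ℤ // p ≠ 0},
        latticePoint t p ≠ 0 ∧ w - latticePoint t p ≠ 0 ∧
        ‖(latticePoint t p)⁻¹‖ ≤ C * ‖p.1‖⁻¹ ∧ ‖(w - latticePoint t p)⁻¹‖ ≤ C * ‖p.1‖⁻¹ := by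
  obtain ⟨δ, hδ, r, hr, h⟩ := exists_uniform_lower_bound hτ hz
  refine ⟨δ⁻¹, by positivity, r, hr, fun t ht w hw p ↦ ?_⟩
  obtain ⟨h1, h2⟩ := h t ht w hw p p.2
  have hp : 0 < δ * ‖p.1‖ := mul_pos hδ (norm_pos_iff.mpr p.2)
  rw [← mul_inv, norm_inv, norm_inv]
  refine ⟨norm_pos_iff.mp (hp.trans_le h1), norm_pos_iff.mp (hp.trans_le h2), ?_, ?_⟩ <;> gcongr

/-- The regular part at `0` of the Weierstrass zeta function of `ℤ + τℤ`. -/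
noncomputable def zetaReg (τ z : ℂ) : ℂ :=
  ∑' p : {p : ℤ × ℤ // p ≠ 0}, zetaTerm (latticePoint τ p) z

/-- The termwise `τ`-derivative of the Weierstrass zeta function of `ℤ + τℤ`. -/
noncomputable def zetaTau (τ z : ℂ) : ℂ :=
  ∑' p : {p : ℤ × ℤ // p ≠ 0}, p.1.2 * zetaTermDeriv (latticePoint τ p) z

lemma zetaReg_zero (τ : ℂ) : zetaReg τ 0 = 0 := by
  simp [zetaReg, zetaTerm]

lemma norm_mul_zetaTermDeriv_le {p : {p : ℤ × ℤ // p ≠ 0}} {ω z : ℂ} {C M : ℝ} (hω : ω ≠ 0)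
    (hz : z - ω ≠ 0) (h1 : ‖ω⁻¹‖ ≤ C * ‖p.1‖⁻¹) (h2 : ‖(z - ω)⁻¹‖ ≤ C * ‖p.1‖⁻¹) (hM : ‖z‖ ≤ M) :
    ‖p.1.2 * zetaTermDeriv ω z‖ ≤ 3 * M ^ 2 * C ^ 4 * (‖p.1‖ ^ 3)⁻¹ := by
  have hp : 0 < ‖p.1‖ := norm_pos_iff.mpr p.2
  have hn : ‖(p.1.2 : ℂ)‖ ≤ ‖p.1‖ := by
    rw [Complex.norm_intCast, ← Int.norm_eq_abs]
    exact norm_snd_le p.1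
  rw [norm_mul]
  calc _ ≤ ‖p.1‖ * (3 * ‖z‖ ^ 2 * (C * ‖p.1‖⁻¹) ^ 4) := by
        gcongr
        exact norm_zetaTermDeriv_le hω hz h1 h2
    _ ≤ ‖p.1‖ * (3 * M ^ 2 * (C * ‖p.1‖⁻¹) ^ 4) := by
        gcongr
    _ = _ := by field_simp

lemma norm_weierstrassP_summand_le {p : {p : ℤ × ℤ // p ≠ 0}} {ω z : ℂ} {C M : ℝ} (hω : ω ≠ 0)
    (hz : z - ω ≠ 0) (h1 : ‖ω⁻¹‖ ≤ C * ‖p.1‖⁻¹) (h2 : ‖(z - ω)⁻¹‖ ≤ C * ‖p.1‖⁻¹) (hM : ‖z‖ ≤ M) :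
    ‖(z - ω)⁻¹ ^ 2 - ω⁻¹ ^ 2‖ ≤ 2 * M * C ^ 3 * (‖p.1‖ ^ 3)⁻¹ := by
  have hC : 0 ≤ C * ‖p.1‖⁻¹ := (norm_nonneg _).trans h1
  calc _ ≤ 2 * ‖z‖ * (C * ‖p.1‖⁻¹) ^ 3 := norm_inv_sq_sub_le hω hz h1 h2
    _ ≤ 2 * M * (C * ‖p.1‖⁻¹) ^ 3 := by gcongr
    _ = _ := by rw [mul_pow, inv_pow]; ring

lemma summable_zetaTerm {τ : ℂ} (hτ : 0 < τ.im) {z : ℂ} (hz : ∀ p ≠ 0, z ≠ latticePoint τ p) :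
    Summable fun p : {p : ℤ × ℤ // p ≠ 0} ↦ zetaTerm (latticePoint τ p) z := by
  obtain ⟨C, hC, r, hr, h⟩ := exists_uniform_inv_bound hτ hz
  refine Summable.of_norm_bounded (summable_norm_pow_three_inv.mul_left (‖z‖ ^ 2 * C ^ 3))
    fun p ↦ ?_
  obtain ⟨h1, h2, h3, h4⟩ := h τ (Metric.mem_ball_self hr) z (Metric.mem_ball_self hr) p
  refine (norm_zetaTerm_le h1 h2 h3 h4).trans_eq ?_
  rw [mul_pow, inv_pow]
  ring

lemma hasDerivAt_zetaTerm_comp {ω z : ℂ → ℂ} {ω' z' s : ℂ} (hω : HasDerivAt ω ω' s)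
    (hz : HasDerivAt z z' s) (h0 : ω s ≠ 0) (h1 : z s - ω s ≠ 0) :
    HasDerivAt (fun s ↦ zetaTerm (ω s) (z s))
      (ω' * zetaTermDeriv (ω s) (z s) - z' * ((z s - ω s)⁻¹ ^ 2 - (ω s)⁻¹ ^ 2)) s := by
  have := (((hz.sub hω).fun_inv h1).add (hω.fun_inv h0)).add (hz.mul ((hω.fun_inv h0).fun_pow 2))
  convert! this using 1
  simp only [zetaTermDeriv, Pi.sub_apply, Nat.cast_ofNat, Nat.add_one_sub_one, pow_one]
  field_simp
  ring

/-- The derivative of the zeta series along a line in the `(τ, z)` space. -/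
theorem hasDerivAt_zetaReg_line {τ : ℂ} (hτ : 0 < τ.im) {z : ℂ}
    (hz : ∀ p ≠ 0, z ≠ latticePoint τ p) (a b : ℂ) :
    HasDerivAt (fun s ↦ zetaReg (τ + a * s) (z + b * s))
      (a * zetaTau τ z - b * (tauPeriodPair τ hτ).weierstrassPExcept 0 z) 0 := by
  obtain ⟨C, hC, r, hr, h⟩ := exists_uniform_inv_bound hτ hz
  set ρ := r / (‖a‖ + ‖b‖ + 1)
  have hρ : 0 < ρ := by positivity
  have hball : ∀ s ∈ Metric.ball (0 : ℂ) ρ,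
      τ + a * s ∈ Metric.ball τ r ∧ z + b * s ∈ Metric.ball z r := by
    intro s hs
    rw [mem_ball_zero_iff, lt_div_iff₀ (by positivity)] at hs
    simp only [mem_ball_iff_norm, add_sub_cancel_left, norm_mul]
    constructor <;> nlinarith [norm_nonneg s, norm_nonneg a, norm_nonneg b]
  set M := ‖z‖ + r
  have hM : ∀ w ∈ Metric.ball z r, ‖w‖ ≤ M := fun w hw ↦ by
    rw [mem_ball_iff_norm] at hw
    linarith [norm_sub_norm_le w z]
  have key := hasDerivAt_tsum_of_isPreconnected (𝕜 := ℂ)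
    (u := fun p : {p : ℤ × ℤ // p ≠ 0} ↦
      (‖a‖ * (3 * M ^ 2 * C ^ 4) + ‖b‖ * (2 * M * C ^ 3)) * (‖p.1‖ ^ 3)⁻¹)
    (g := fun p s ↦ zetaTerm (latticePoint (τ + a * s) p) (z + b * s))
    (g' := fun p s ↦ a * (p.1.2 * zetaTermDeriv (latticePoint (τ + a * s) p) (z + b * s)) -
      b * ((z + b * s - latticePoint (τ + a * s) p)⁻¹ ^ 2 - (latticePoint (τ + a * s) p)⁻¹ ^ 2))
    (t := Metric.ball 0 ρ) (y₀ := 0) (y := 0) (summable_norm_pow_three_inv.mul_left _)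
    Metric.isOpen_ball (Metric.isPreconnected_ball) ?_ ?_ (Metric.mem_ball_self hρ) ?_
    (Metric.mem_ball_self hρ)
  · refine (key.congr_deriv ?_)
    simp only [mul_zero, add_zero]
    obtain hV := hasSum_weierstrassPExcept_zero τ hτ z
    have hE : Summable fun p : {p : ℤ × ℤ // p ≠ 0} ↦
        p.1.2 * zetaTermDeriv (latticePoint τ p) z := by
      refine Summable.of_norm_bounded (summable_norm_pow_three_inv.mul_left (3 * M ^ 2 * C ^ 4))
        fun p ↦ ?_
      obtain ⟨h1, h2, h3, h4⟩ := h τ (Metric.mem_ball_self hr) z (Metric.mem_ball_self hr) p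
      exact norm_mul_zetaTermDeriv_le h1 h2 h3 h4 (hM z (Metric.mem_ball_self hr))
    rw [((hE.hasSum.mul_left a).sub (hV.mul_left b)).tsum_eq]
    rfl
  · intro p s hs
    obtain ⟨ht, hw⟩ := hball s hs
    obtain ⟨h1, h2, -, -⟩ := h _ ht _ hw p
    have hd1 : HasDerivAt (fun s ↦ latticePoint (τ + a * s) p) (p.1.2 * a) s := by
      have := (((hasDerivAt_id s).const_mul a).const_add τ).const_mul (p.1.2 : ℂ)
      simpa [latticePoint] using this.const_add (p.1.1 : ℂ)
    have hd2 : HasDerivAt (fun s ↦ z + b * s) b s := by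
      simpa using ((hasDerivAt_id s).const_mul b).const_add z
    refine (hasDerivAt_zetaTerm_comp hd1 hd2 h1 h2).congr_deriv ?_
    ring
  · intro p s hs
    obtain ⟨ht, hw⟩ := hball s hs
    obtain ⟨h1, h2, h3, h4⟩ := h _ ht _ hw p
    refine (norm_sub_le _ _).trans ?_
    rw [norm_mul, norm_mul b, add_mul, mul_assoc ‖a‖, mul_assoc ‖b‖]
    gcongr
    · exact norm_mul_zetaTermDeriv_le h1 h2 h3 h4 (hM _ hw)
    · exact norm_weierstrassP_summand_le h1 h2 h3 h4 (hM _ hw)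
  · simpa using summable_zetaTerm hτ hz

lemma differentiableAt_zetaTau {τ : ℂ} (hτ : 0 < τ.im) {z : ℂ}
    (hz : ∀ p ≠ 0, z ≠ latticePoint τ p) : DifferentiableAt ℂ (zetaTau τ) z := by
  obtain ⟨C, hC, r, hr, h⟩ := exists_uniform_inv_bound hτ hz
  refine (differentiableOn_tsum_of_summable_norm (U := Metric.ball z r)
    (u := fun p : {p : ℤ × ℤ // p ≠ 0} ↦ 3 * (‖z‖ + r) ^ 2 * C ^ 4 * (‖p.1‖ ^ 3)⁻¹)
    (summable_norm_pow_three_inv.mul_left _) ?_ Metric.isOpen_ball ?_).differentiableAt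
    (Metric.ball_mem_nhds z hr)
  · intro p w hw
    obtain ⟨h1, h2, -, -⟩ := h _ (Metric.mem_ball_self hr) _ hw p
    simp only [zetaTermDeriv]
    have : DifferentiableAt ℂ (fun w ↦ (p.1.2 : ℂ) * ((w - latticePoint τ p)⁻¹ ^ 2 -
      (latticePoint τ p)⁻¹ ^ 2 - 2 * w * (latticePoint τ p)⁻¹ ^ 3)) w := by
      fun_prop (disch := assumption)
    exact this.differentiableWithinAt
  · intro p w hw
    obtain ⟨h1, h2, h3, h4⟩ := h _ (Metric.mem_ball_self hr) _ hw p
    refine norm_mul_zetaTermDeriv_le h1 h2 h3 h4 ?_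
    rw [mem_ball_iff_norm] at hw
    linarith [norm_sub_norm_le w z]

lemma latticePoint_ne_zero {τ : ℂ} (hτ : 0 < τ.im) : ∀ p ≠ 0, 0 ≠ latticePoint τ p := by
  intro p hp h
  obtain ⟨c, hc, hcp⟩ := exists_mul_norm_le_norm_latticePoint hτ
  have := hcp p
  rw [← h, norm_zero] at this
  exact absurd this (not_le.mpr (mul_pos hc (norm_pos_iff.mpr hp)))

lemma zetaTau_isBigO {τ : ℂ} (hτ : 0 < τ.im) : zetaTau τ =O[𝓝 0] fun z ↦ z ^ 2 := by
  obtain ⟨C, hC, r, hr, h⟩ := exists_uniform_inv_bound hτ (latticePoint_ne_zero hτ)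
  refine IsBigO.of_bound
    (3 * C ^ 4 * ∑' p : {p : ℤ × ℤ // p ≠ 0}, (‖p.1‖ ^ 3)⁻¹) ?_
  filter_upwards [Metric.ball_mem_nhds (0 : ℂ) hr] with z hz
  have := tsum_of_norm_bounded
    (summable_norm_pow_three_inv.hasSum.mul_left (3 * ‖z‖ ^ 2 * C ^ 4))
    (f := fun p : {p : ℤ × ℤ // p ≠ 0} ↦ p.1.2 * zetaTermDeriv (latticePoint τ p) z) fun p ↦ by
      obtain ⟨h1, h2, h3, h4⟩ := h _ (Metric.mem_ball_self hr) _ hz p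
      exact norm_mul_zetaTermDeriv_le h1 h2 h3 h4 le_rfl
  refine this.trans_eq ?_
  rw [norm_pow]
  ring

lemma HasDerivAt.of_comp_const_add_zero {f : ℂ → ℂ} {f' x : ℂ}
    (h : HasDerivAt (fun s ↦ f (x + s)) f' 0) : HasDerivAt f f' x := by
  have h' : HasDerivAt (fun s ↦ f (x + s)) f' (-x + x) := by rwa [neg_add_cancel]
  simpa using h'.comp_const_add (-x) x

/-- The Weierstrass zeta function of `ℤ + τℤ`, as a series. -/
noncomputable def zetaSeries (τ z : ℂ) : ℂ := z⁻¹ + zetaReg τ z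

lemma ne_latticePoint_of_not_inLattice {τ z : ℂ} (hz : ¬ InLattice τ z) (p : ℤ × ℤ) :
    z ≠ latticePoint τ p :=
  fun h ↦ hz ((inLattice_iff τ z).mpr ⟨p, h⟩)

lemma ne_zero_of_not_inLattice {τ z : ℂ} (hz : ¬ InLattice τ z) : z ≠ 0 := by
  simpa [latticePoint] using ne_latticePoint_of_not_inLattice hz 0

lemma hasDerivAt_zetaReg {τ : ℂ} (hτ : 0 < τ.im) {z : ℂ}
    (hz : ∀ p ≠ 0, z ≠ latticePoint τ p) :
    HasDerivAt (zetaReg τ) (-(tauPeriodPair τ hτ).weierstrassPExcept 0 z) z :=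
  .of_comp_const_add_zero (by simpa using hasDerivAt_zetaReg_line hτ hz 0 1)

lemma hasDerivAt_zetaSeries {τ : ℂ} (hτ : 0 < τ.im) {z : ℂ} (hz : ¬ InLattice τ z) :
    HasDerivAt (zetaSeries τ) (-wp τ z) z := by
  refine ((hasDerivAt_inv (ne_zero_of_not_inLattice hz)).add
    (hasDerivAt_zetaReg hτ fun p _ ↦ ne_latticePoint_of_not_inLattice hz p)).congr_deriv ?_
  rw [wp_eq_add τ hτ]
  ring

lemma hasDerivAt_zetaSeries_tau {τ : ℂ} (hτ : 0 < τ.im) {z : ℂ} (hz : ¬ InLattice τ z) :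
    HasDerivAt (fun t ↦ zetaSeries t z) (zetaTau τ z) τ := by
  refine .of_comp_const_add_zero ?_
  have := hasDerivAt_zetaReg_line hτ (fun p _ ↦ ne_latticePoint_of_not_inLattice hz p) 1 0
  simpa [zetaSeries] using this.const_add z⁻¹

lemma hasDerivAt_zetaSeries_add {τ : ℂ} (hτ : 0 < τ.im) {z : ℂ} (hz : ¬ InLattice τ (z + τ)) :
    HasDerivAt (fun t ↦ zetaSeries t (z + t)) (zetaTau τ (z + τ) - wp τ (z + τ)) τ := by
  refine .of_comp_const_add_zero ?_
  have h1 := hasDerivAt_zetaReg_line hτ (fun p _ ↦ ne_latticePoint_of_not_inLattice hz p) 1 1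
  have h0 : z + τ + 0 ≠ 0 := by simpa using ne_zero_of_not_inLattice hz
  have h2 := ((hasDerivAt_inv h0).comp_const_add (z + τ) 0).add h1
  simp only [one_mul, add_assoc] at h2
  refine h2.congr_deriv ?_
  rw [wp_eq_add τ hτ]
  simp
  ring

lemma tendsto_zetaReg {τ : ℂ} (hτ : 0 < τ.im) : Tendsto (zetaReg τ) (𝓝 0) (𝓝 0) := by
  have := (hasDerivAt_zetaReg hτ (latticePoint_ne_zero hτ)).continuousAt.tendsto
  rwa [zetaReg_zero] at this

lemma IsWeierstrassZeta.eq_zetaSeries {zeta : ℂ → ℂ → ℂ} (h : IsWeierstrassZeta zeta) {τ : ℂ}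
    (hτ : 0 < τ.im) {z : ℂ} (hz : ¬ InLattice τ z) : zeta τ z = zetaSeries τ z := by
  obtain ⟨-, hd, hlim⟩ := h τ hτ
  set L := tauPeriodPair τ hτ
  have hmem := inLattice_iff_mem_lattice τ hτ
  have hderiv : ∀ w ∉ L.lattice, HasDerivAt (zeta τ - zetaSeries τ) 0 w := by
    intro w hw
    rw [← hmem] at hw
    exact ((hd w hw).sub (hasDerivAt_zetaSeries hτ hw)).congr_deriv (by ring)
  obtain ⟨c, hc⟩ := L.isClosed_lattice.isOpen_compl.exists_is_const_of_deriv_eq_zero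
    L.isPreconnected_compl_lattice
    (fun w hw ↦ (hderiv w hw).differentiableAt.differentiableWithinAt)
    (fun w hw ↦ (hderiv w hw).deriv)
  have hlim2 := hlim.sub ((tendsto_zetaReg hτ).mono_left (nhdsWithin_le_nhds (s := {0}ᶜ)))
  rw [sub_zero] at hlim2
  have hc0 : c = 0 := by
    refine tendsto_nhds_unique (tendsto_const_nhds.congr' ?_) hlim2
    filter_upwards [L.eventually_notMem_lattice 0] with w hw
    have := hc w hw
    simp only [Pi.sub_apply, zetaSeries] at this
    rw [← this]
    ring
  have := hc z (by rwa [hmem] at hz)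
  rw [hc0] at this
  exact sub_eq_zero.mp this

lemma eventually_not_inLattice {τ : ℂ} (hτ : 0 < τ.im) {z : ℂ} (hz : ¬ InLattice τ z) :
    ∀ᶠ t in 𝓝 τ, 0 < t.im ∧ ¬ InLattice t z := by
  obtain ⟨C, hC, r, hr, h⟩ := exists_uniform_inv_bound hτ
    fun p _ ↦ ne_latticePoint_of_not_inLattice hz p
  filter_upwards [Metric.ball_mem_nhds τ hr,
    continuous_im.continuousAt.eventually_const_lt hτ] with t ht him
  refine ⟨him, fun hzt ↦ ?_⟩
  obtain ⟨p, hp⟩ := (inLattice_iff t z).mp hzt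
  by_cases hp0 : p = 0
  · exact ne_zero_of_not_inLattice hz (by simpa [hp0, latticePoint] using hp)
  · exact (h t ht z (Metric.mem_ball_self hr) ⟨p, hp0⟩).2.1 (sub_eq_zero.mpr hp)

lemma inLattice_add_one_iff (τ z : ℂ) : InLattice τ (z + 1) ↔ InLattice τ z :=
  ⟨fun ⟨m, n, h⟩ ↦ ⟨m - 1, n, by push_cast; linear_combination h⟩,
    fun ⟨m, n, h⟩ ↦ ⟨m + 1, n, by push_cast; linear_combination h⟩⟩

lemma inLattice_add_tau_iff (τ z : ℂ) : InLattice τ (z + τ) ↔ InLattice τ z :=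
  ⟨fun ⟨m, n, h⟩ ↦ ⟨m, n - 1, by push_cast; linear_combination h⟩,
    fun ⟨m, n, h⟩ ↦ ⟨m, n + 1, by push_cast; linear_combination h⟩⟩

lemma tendsto_inv_sub_intCast_mul (c : ℂ) {d : ℂ} (hd : d ≠ 0) :
    Tendsto (fun k : ℤ ↦ (c - k * d)⁻¹) cofinite (𝓝 0) := by
  refine tendsto_inv₀_cobounded.comp ?_
  rw [← tendsto_norm_atTop_iff_cobounded]
  have h : Tendsto (fun k : ℤ ↦ ‖(k : ℝ)‖ * ‖d‖ + -‖c‖) cofinite atTop :=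
    tendsto_atTop_add_const_right _ _
      (((tendsto_norm_cocompact_atTop.comp Int.tendsto_coe_cofinite)).atTop_mul_const
        (norm_pos_iff.mpr hd))
  refine tendsto_atTop_mono (fun k ↦ ?_) h
  have := norm_sub_norm_le ((k : ℂ) * d) c
  rw [norm_mul, norm_sub_rev, Complex.norm_intCast] at this
  simpa [sub_eq_add_neg] using this

/-- Telescoping the partial fractions along a row of the lattice. -/
lemma tsum_inv_sub_inv_add (c : ℂ) {d : ℂ} (hd : d ≠ 0) {g : ℤ → ℂ} (hg : Summable g)
    (hF : Summable fun k : ℤ ↦ (c + d - k * d)⁻¹ - (c - k * d)⁻¹ + g k) :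
    ∑' k : ℤ, ((c + d - k * d)⁻¹ - (c - k * d)⁻¹ + g k) = ∑' k, g k := by
  have hs : Summable fun k : ℤ ↦ (c + d - k * d)⁻¹ - (c - k * d)⁻¹ := by
    simpa using hF.sub hg
  rw [hs.tsum_add hg, add_eq_right,
    ← tsum_eq_of_summable_unconditional (L := SummationFilter.symmetricIco ℤ) hs]
  refine HasSum.tsum_eq ?_
  rw [SummationFilter.hasSum_symmetricIco_int_iff]
  have h0 := tendsto_inv_sub_intCast_mul (c + d) hd
  have h1 : Tendsto (fun N : ℕ ↦ (N : ℤ)) atTop cofinite :=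
    Nat.cofinite_eq_atTop ▸ Nat.cast_injective.tendsto_cofinite
  have h2 : Tendsto (fun N : ℕ ↦ -(N : ℤ)) atTop cofinite :=
    neg_injective.tendsto_cofinite.comp h1
  have h3 := (h0.comp h2).sub (h0.comp h1)
  rw [sub_zero] at h3
  refine h3.congr fun N ↦ ?_
  simp only [Function.comp_apply]
  rw [← Finset.sum_Ico_int_sub N fun k : ℤ ↦ (c + d - k * d)⁻¹]
  refine Finset.sum_congr rfl fun k _ ↦ ?_
  congr 2
  push_cast
  ring

lemma hasSum_zetaTerm {τ : ℂ} (hτ : 0 < τ.im) {z : ℂ} (hz : ¬ InLattice τ z) :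
    HasSum (fun p : ℤ × ℤ ↦ zetaTerm (latticePoint τ p) z) (zetaSeries τ z) := by
  have h := (summable_zetaTerm hτ fun p _ ↦ ne_latticePoint_of_not_inLattice hz p).hasSum
  have h2 := ((hasSum_subtype_iff_indicator (s := {p : ℤ × ℤ | p ≠ 0})
    (f := fun p ↦ zetaTerm (latticePoint τ p) z)).mp h).add (hasSum_pi_single (0 : ℤ × ℤ) z⁻¹)
  rw [zetaSeries, zetaReg, add_comm]
  refine h2.congr_fun fun p ↦ ?_
  by_cases hp : p = 0 <;> simp [hp, zetaTerm, latticePoint]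

lemma hasSum_zetaSeries_add_sub {τ : ℂ} (hτ : 0 < τ.im) {z l : ℂ} (hz : ¬ InLattice τ z)
    (hzl : ¬ InLattice τ (z + l)) :
    HasSum (fun p : ℤ × ℤ ↦ (z + l - latticePoint τ p)⁻¹ - (z - latticePoint τ p)⁻¹ +
      l * (latticePoint τ p)⁻¹ ^ 2) (zetaSeries τ (z + l) - zetaSeries τ z) := by
  refine ((hasSum_zetaTerm hτ hzl).sub (hasSum_zetaTerm hτ hz)).congr_fun fun p ↦ ?_
  simp only [zetaTerm]
  ring

open EisensteinSeries in
lemma zetaSeries_add_one_sub {τ : ℂ} (hτ : 0 < τ.im) {z : ℂ} (hz : ¬ InLattice τ z) :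
    zetaSeries τ (z + 1) - zetaSeries τ z = G2 ⟨τ, hτ⟩ := by
  have h := hasSum_zetaSeries_add_sub hτ hz (by rwa [inLattice_add_one_iff])
  have hs := (Equiv.prodComm ℤ ℤ).summable_iff.mpr h.summable
  simp only [Function.comp_def] at hs
  rw [← h.tsum_eq, ← (Equiv.prodComm ℤ ℤ).tsum_eq, hs.tsum_prod,
    ← tsum_eq_of_summable_unconditional (L := SummationFilter.symmetricIco ℤ) hs.prod,
    G2_eq_tsum_symmetricIco]
  congr 1 with n
  have hg : Summable fun m : ℤ ↦ (latticePoint τ (m, n))⁻¹ ^ 2 :=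
    (linear_right_summable τ n (le_refl 2)).congr fun m ↦ by
      rw [latticePoint, inv_pow, add_comm, zpow_ofNat]
  have hF := hs.prod_factor n
  simp only [Equiv.prodComm_apply, Prod.swap_prod_mk, one_mul] at hF ⊢
  have key := tsum_inv_sub_inv_add (z - n * τ) one_ne_zero hg
    (hF.congr fun m ↦ by simp only [latticePoint]; ring_nf)
  rw [e2Summand]
  convert! key using 3 with m m
  · simp only [latticePoint]; ring_nf
  · simp [eisSummand, latticePoint, add_comm]

open EisensteinSeries in
lemma zetaSeries_add_tau_sub {τ : ℂ} (hτ : 0 < τ.im) {z : ℂ} (hz : ¬ InLattice τ z) :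
    zetaSeries τ (z + τ) - zetaSeries τ z =
      τ * (zetaSeries τ (z + 1) - zetaSeries τ z) - 2 * Real.pi * I := by
  have h := hasSum_zetaSeries_add_sub hτ hz (by rwa [inLattice_add_tau_iff])
  have hs := h.summable
  have hτ0 : τ ≠ 0 := fun h ↦ by simp [h] at hτ
  have hS := tsum_symmetricIco_tsum_eq_S_act ⟨τ, hτ⟩
  have hT := G2_S_transform ⟨τ, hτ⟩
  rw [zetaSeries_add_one_sub hτ hz, ← h.tsum_eq, hs.tsum_prod,
    ← tsum_eq_of_summable_unconditional (L := SummationFilter.symmetricIco ℤ) hs.prod, hT, ← hS]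
  have hrow (m : ℤ) : ∑' n : ℤ, ((z + τ - latticePoint τ (m, n))⁻¹ -
      (z - latticePoint τ (m, n))⁻¹ + τ * (latticePoint τ (m, n))⁻¹ ^ 2) =
      τ * ∑' n : ℤ, 1 / ((n : ℂ) * τ + m) ^ 2 := by
    have hg : Summable fun n : ℤ ↦ τ * (latticePoint τ (m, n))⁻¹ ^ 2 :=
      ((linear_left_summable hτ0 m (le_refl 2)).congr fun n ↦ by
        rw [latticePoint, inv_pow, add_comm, zpow_ofNat]).mul_left τ
    have key := tsum_inv_sub_inv_add (z - m) hτ0 hg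
      ((hs.prod_factor m).congr fun n ↦ by simp only [latticePoint]; ring_nf)
    rw [← tsum_mul_left]
    convert! key using 3 with n n
    · simp only [latticePoint]; ring_nf
    · simp [latticePoint, add_comm]
  simp only [hrow, tsum_mul_left]
  field_simp
  ring

lemma PeriodPair.quasiperiodic_of_generators (L : PeriodPair) {f : ℂ → ℂ}
    (h₁ : ∃ c, ∀ z ∉ L.lattice, f (z + L.ω₁) = f z + c)
    (h₂ : ∃ c, ∀ z ∉ L.lattice, f (z + L.ω₂) = f z + c) {l : ℂ} (hl : l ∈ L.lattice) :
    ∃ c, ∀ z ∉ L.lattice, f (z + l) = f z + c := by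
  let G : AddSubgroup ℂ :=
    { carrier := {l | l ∈ L.lattice ∧ ∃ c, ∀ z ∉ L.lattice, f (z + l) = f z + c}
      zero_mem' := ⟨zero_mem _, 0, by simp⟩
      add_mem' := by
        rintro a b ⟨ha, c, hc⟩ ⟨hb, d, hd⟩
        refine ⟨add_mem ha hb, c + d, fun z hz ↦ ?_⟩
        rw [← add_assoc, hd _ fun h ↦ hz ((add_mem_cancel_right ha).mp h), hc z hz, add_assoc]
      neg_mem' := by
        rintro a ⟨ha, c, hc⟩
        refine ⟨neg_mem ha, -c, fun z hz ↦ ?_⟩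
        have := hc (z + -a) fun h ↦ hz ((add_mem_cancel_right (neg_mem ha)).mp h)
        rw [neg_add_cancel_right] at this
        rw [this]
        ring }
  have hle : L.lattice ≤ G.toIntSubmodule := by
    refine Submodule.span_le.mpr ?_
    rintro x (rfl | rfl)
    · exact ⟨L.ω₁_mem_lattice, h₁⟩
    · exact ⟨L.ω₂_mem_lattice, h₂⟩
  exact (hle hl).2

namespace PeriodPair

variable (L : PeriodPair)

lemma hasDerivAt_weierstrassPExcept_zero :
    ∀ᶠ z in 𝓝 0, HasDerivAt (L.weierstrassPExcept 0) (L.derivWeierstrassPExcept 0 z) z := by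
  filter_upwards [L.compl_lattice_sdiff_singleton_mem_nhds 0] with z hz
  have h := ((L.differentiableOn_weierstrassPExcept 0).differentiableAt
    (L.isOpen_compl_lattice_sdiff.mem_nhds hz)).hasDerivAt
  rwa [L.eqOn_deriv_weierstrassPExcept_derivWeierstrassPExcept 0 hz] at h

lemma derivWeierstrassPExcept_zero_isLittleO :
    (fun z ↦ L.derivWeierstrassPExcept 0 z - 6 * L.G 4 * z) =o[𝓝 0] fun z ↦ z ^ 1 := by
  have h := (L.analyticAt_derivWeierstrassPExcept 0).differentiableAt.hasDerivAt.isLittleO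
  rw [L.deriv_derivWeierstrassPExcept_self, sumInvPow_zero] at h
  simpa [mul_comm] using h

lemma weierstrassPExcept_zero_isLittleO :
    (fun z ↦ L.weierstrassPExcept 0 z - 3 * L.G 4 * z ^ 2) =o[𝓝 0] fun z ↦ z ^ 2 := by
  refine isLittleO_pow_succ_of_deriv (by simp) ?_ L.derivWeierstrassPExcept_zero_isLittleO
  filter_upwards [L.hasDerivAt_weierstrassPExcept_zero] with z hz
  refine (hz.sub ((hasDerivAt_pow 2 z).const_mul (3 * L.G 4))).congr_deriv ?_
  simp
  ring

end PeriodPair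

lemma zetaReg_isLittleO {τ : ℂ} (hτ : 0 < τ.im) :
    (fun z ↦ zetaReg τ z + (tauPeriodPair τ hτ).G 4 * z ^ 3) =o[𝓝 0] fun z ↦ z ^ 3 := by
  set L := tauPeriodPair τ hτ
  refine isLittleO_pow_succ_of_deriv (by simp [zetaReg_zero]) ?_
    L.weierstrassPExcept_zero_isLittleO.neg_left
  filter_upwards [L.compl_lattice_sdiff_singleton_mem_nhds 0] with z hz
  have hz' : ∀ p ≠ 0, z ≠ latticePoint τ p := fun p hp h ↦ hz
    ⟨(inLattice_iff_mem_lattice τ hτ z).mp ((inLattice_iff τ z).mpr ⟨p, h⟩),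
      fun h0 ↦ latticePoint_ne_zero hτ p hp (h0 ▸ h)⟩
  refine ((hasDerivAt_zetaReg hτ hz').add ((hasDerivAt_pow 3 z).const_mul (L.G 4))).congr_deriv ?_
  simp
  ring

lemma zetaTau_add_one_sub {τ : ℂ} (hτ : 0 < τ.im) {z w : ℂ} (hz : ¬ InLattice τ z)
    (hw : ¬ InLattice τ w) :
    zetaTau τ (z + 1) - zetaTau τ z = zetaTau τ (w + 1) - zetaTau τ w := by
  have h (x : ℂ) (hx : ¬ InLattice τ x) :=
    (hasDerivAt_zetaSeries_tau hτ (by rwa [inLattice_add_one_iff])).sub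
      (hasDerivAt_zetaSeries_tau hτ hx)
  refine (h z hz).unique ((h w hw).congr_of_eventuallyEq ?_)
  filter_upwards [eventually_not_inLattice hτ hz, eventually_not_inLattice hτ hw] with t htz htw
  simp only [Pi.sub_apply]
  rw [zetaSeries_add_one_sub htz.1 htz.2, zetaSeries_add_one_sub htw.1 htw.2]

lemma zetaTau_add_tau_sub {τ : ℂ} (hτ : 0 < τ.im) {z w : ℂ} (hz : ¬ InLattice τ z)
    (hw : ¬ InLattice τ w) :
    zetaTau τ (z + τ) - wp τ (z + τ) - zetaTau τ z =
      zetaTau τ (w + τ) - wp τ (w + τ) - zetaTau τ w := by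
  have h (x : ℂ) (hx : ¬ InLattice τ x) :=
    (hasDerivAt_zetaSeries_add hτ (by rwa [inLattice_add_tau_iff])).sub
      (hasDerivAt_zetaSeries_tau hτ hx)
  refine (h z hz).unique ((h w hw).congr_of_eventuallyEq ?_)
  filter_upwards [eventually_not_inLattice hτ hz, eventually_not_inLattice hτ hw] with t htz htw
  simp only [Pi.sub_apply]
  rw [zetaSeries_add_tau_sub htz.1 htz.2, zetaSeries_add_tau_sub htw.1 htw.2,
    zetaSeries_add_one_sub htz.1 htz.2, zetaSeries_add_one_sub htw.1 htw.2]

/-- The closed form of the `τ`-derivative of the zeta function, with quasi-period `η`. -/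
noncomputable def zetaTauFormula (τ η z : ℂ) : ℂ :=
  (I / (4 * (Real.pi : ℂ))) *
    (wpd τ z + 2 * (zetaSeries τ z - z * η) * wp τ z
      + 2 * η * zetaSeries τ z - (1 / 6) * z * g2 τ)

lemma wp_add {τ : ℂ} (hτ : 0 < τ.im) {l : ℂ} (hl : l ∈ (tauPeriodPair τ hτ).lattice) (z : ℂ) :
    wp τ (z + l) = wp τ z := by
  rw [wp_eq_weierstrassP τ hτ]
  exact (tauPeriodPair τ hτ).weierstrassP_add_coe z ⟨l, hl⟩

lemma wpd_add {τ : ℂ} (hτ : 0 < τ.im) {l : ℂ} (hl : l ∈ (tauPeriodPair τ hτ).lattice) (z : ℂ) :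
    wpd τ (z + l) = wpd τ z := by
  rw [wpd_eq_derivWeierstrassP τ hτ]
  exact (tauPeriodPair τ hτ).derivWeierstrassP_add_coe z ⟨l, hl⟩

lemma zetaTauFormula_add_one {τ : ℂ} (hτ : 0 < τ.im) {η : ℂ}
    (hη : ∀ z, ¬ InLattice τ z → zetaSeries τ (z + 1) - zetaSeries τ z = η) {z : ℂ}
    (hz : ¬ InLattice τ z) :
    zetaTauFormula τ η (z + 1) = zetaTauFormula τ η z +
      (I / (4 * (Real.pi : ℂ))) * (2 * η ^ 2 - (1 / 6) * g2 τ) := by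
  have h1 : (1 : ℂ) ∈ (tauPeriodPair τ hτ).lattice := (tauPeriodPair τ hτ).ω₁_mem_lattice
  simp only [zetaTauFormula, wp_add hτ h1, wpd_add hτ h1]
  rw [eq_add_of_sub_eq (hη z hz)]
  ring

lemma zetaTauFormula_add_tau {τ : ℂ} (hτ : 0 < τ.im) {η : ℂ}
    (hη : ∀ z, ¬ InLattice τ z → zetaSeries τ (z + 1) - zetaSeries τ z = η) {z : ℂ}
    (hz : ¬ InLattice τ z) :
    zetaTauFormula τ η (z + τ) = zetaTauFormula τ η z + wp τ z +
      (I / (4 * (Real.pi : ℂ))) *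
        (2 * η * (τ * η - 2 * Real.pi * I) - (1 / 6) * τ * g2 τ) := by
  have h1 : τ ∈ (tauPeriodPair τ hτ).lattice := (tauPeriodPair τ hτ).ω₂_mem_lattice
  have h2 := zetaSeries_add_tau_sub hτ hz
  rw [hη z hz] at h2
  have hc : (I / (4 * (Real.pi : ℂ))) * (-4 * Real.pi * I) = 1 := by
    have : (Real.pi : ℂ) ≠ 0 := by simp [Real.pi_ne_zero]
    field_simp
    simp
  simp only [zetaTauFormula, wp_add hτ h1, wpd_add hτ h1]
  rw [eq_add_of_sub_eq h2]
  linear_combination wp τ z * hc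

lemma zetaTau_sub_formula_quasiperiodic {τ : ℂ} (hτ : 0 < τ.im) {η : ℂ}
    (hη : ∀ z, ¬ InLattice τ z → zetaSeries τ (z + 1) - zetaSeries τ z = η) {l : ℂ}
    (hl : l ∈ (tauPeriodPair τ hτ).lattice) :
    ∃ c, ∀ z ∉ (tauPeriodPair τ hτ).lattice,
      zetaTau τ (z + l) - zetaTauFormula τ η (z + l) = zetaTau τ z - zetaTauFormula τ η z + c := by
  set L := tauPeriodPair τ hτ
  have hmem := inLattice_iff_mem_lattice τ hτ
  obtain ⟨w, hw⟩ : ∃ w, ¬ InLattice τ w := ⟨_, (hmem _).not.mpr L.ω₁_div_two_notMem_lattice⟩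
  refine L.quasiperiodic_of_generators (f := fun z ↦ zetaTau τ z - zetaTauFormula τ η z)
    ⟨zetaTau τ (w + 1) - zetaTau τ w -
      (I / (4 * (Real.pi : ℂ))) * (2 * η ^ 2 - (1 / 6) * g2 τ), fun z hz ↦ ?_⟩
    ⟨zetaTau τ (w + τ) - wp τ (w + τ) - zetaTau τ w - (I / (4 * (Real.pi : ℂ))) *
        (2 * η * (τ * η - 2 * Real.pi * I) - (1 / 6) * τ * g2 τ), fun z hz ↦ ?_⟩ hl
  · rw [← hmem] at hz
    change zetaTau τ (z + 1) - zetaTauFormula τ η (z + 1) = _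
    rw [zetaTauFormula_add_one hτ hη hz]
    linear_combination zetaTau_add_one_sub hτ hz hw
  · rw [← hmem] at hz
    change zetaTau τ (z + τ) - zetaTauFormula τ η (z + τ) = _
    rw [zetaTauFormula_add_tau hτ hη hz]
    have hper : wp τ (z + τ) = wp τ z := wp_add hτ L.ω₂_mem_lattice z
    linear_combination zetaTau_add_tau_sub hτ hz hw + hper

lemma isLittleO_mul_inv_pow {f : ℂ → ℂ} {n : ℕ} (hf : f =o[𝓝 0] fun z ↦ z ^ (n + 1)) :
    (fun z ↦ f z * z⁻¹ ^ n) =o[𝓝[≠] 0] fun z ↦ z := by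
  refine ((hf.mono nhdsWithin_le_nhds).mul_isBigO
    (isBigO_refl (fun z : ℂ ↦ z⁻¹ ^ n) (𝓝[≠] 0))).congr' .rfl ?_
  filter_upwards [self_mem_nhdsWithin] with z (hz : z ≠ 0)
  rw [inv_pow, pow_succ', mul_assoc, mul_inv_cancel₀ (pow_ne_zero n hz), mul_one]

lemma zetaTauFormula_isLittleO {τ : ℂ} (hτ : 0 < τ.im) (η : ℂ) :
    zetaTauFormula τ η =o[𝓝[≠] 0] fun z ↦ z := by
  set L := tauPeriodPair τ hτ
  have hP' := isLittleO_mul_inv_pow (n := 0) L.derivWeierstrassPExcept_zero_isLittleO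
  have hP := isLittleO_mul_inv_pow (n := 1) L.weierstrassPExcept_zero_isLittleO
  have hQ := isLittleO_mul_inv_pow (n := 2) (zetaReg_isLittleO hτ)
  have hpow (m : ℕ) : (fun z : ℂ ↦ z ^ (m + 2)) =o[𝓝[≠] 0] fun z ↦ z := by
    have := (isLittleO_pow_pow (𝕜 := ℂ) (show 1 < m + 2 by lia)).mono
      (nhdsWithin_le_nhds (s := {0}ᶜ))
    simpa using this
  have hPo : L.weierstrassPExcept 0 =o[𝓝[≠] 0] fun z ↦ z := by
    have h1 : L.weierstrassPExcept 0 =O[𝓝 0] fun z ↦ z ^ 2 := by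
      simpa using L.weierstrassPExcept_zero_isLittleO.isBigO.add
        ((isBigO_refl (fun z : ℂ ↦ z ^ 2) (𝓝 0)).const_mul_left (3 * L.G 4))
    exact (h1.mono nhdsWithin_le_nhds).trans_isLittleO (hpow 0)
  have hQo : zetaReg τ =o[𝓝[≠] 0] fun z ↦ z := by
    have h1 : zetaReg τ =O[𝓝 0] fun z ↦ z ^ 3 := by
      simpa [L] using (zetaReg_isLittleO hτ).isBigO.sub
        ((isBigO_refl (fun z : ℂ ↦ z ^ 3) (𝓝 0)).const_mul_left (L.G 4))
    exact (h1.mono nhdsWithin_le_nhds).trans_isLittleO (hpow 1)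
  have hb : (fun z ↦ zetaReg τ z - η * z) =O[𝓝[≠] 0] fun _ ↦ (1 : ℂ) := by
    have h1 : Tendsto (fun z ↦ zetaReg τ z - η * z) (𝓝 0) (𝓝 (0 - η * 0)) :=
      (tendsto_zetaReg hτ).sub (tendsto_id.const_mul η)
    exact (h1.mono_left nhdsWithin_le_nhds).isBigO_one ℂ
  have hbP := hb.mul_isLittleO hPo
  simp only [one_mul] at hbP
  have hsum := ((((hP'.add (hP.const_mul_left 2)).add (hQ.const_mul_left 2)).add
    (hbP.const_mul_left 2)).add (hQo.const_mul_left (2 * η))).const_mul_left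
      (I / (4 * (Real.pi : ℂ)))
  refine hsum.congr' ?_ .rfl
  filter_upwards [self_mem_nhdsWithin] with z (hz : z ≠ 0)
  have hd := L.derivWeierstrassPExcept_sub 0 z
  simp only [ZeroMemClass.coe_zero, sub_zero] at hd
  rw [zetaTauFormula, wpd_eq_derivWeierstrassP τ hτ, wp_eq_add τ hτ, g2_eq_G_four τ hτ, zetaSeries,
    ← hd]
  field_simp
  ring

lemma zetaTau_eq_formula {τ : ℂ} (hτ : 0 < τ.im) {η : ℂ}
    (hη : ∀ z, ¬ InLattice τ z → zetaSeries τ (z + 1) - zetaSeries τ z = η) {z : ℂ}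
    (hz : ¬ InLattice τ z) : zetaTau τ z = zetaTauFormula τ η z := by
  set L := tauPeriodPair τ hτ
  have hmem := inLattice_iff_mem_lattice τ hτ
  set F : ℂ → ℂ := fun z ↦ zetaTau τ z - zetaTauFormula τ η z
  have hF : F =o[𝓝[≠] 0] fun z ↦ z := by
    refine IsLittleO.sub ?_ (zetaTauFormula_isLittleO hτ η)
    have := (isLittleO_pow_pow (𝕜 := ℂ) one_lt_two).mono (nhdsWithin_le_nhds (s := {0}ᶜ))
    simpa using ((zetaTau_isBigO hτ).mono nhdsWithin_le_nhds).trans_isLittleO this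
  have hid : Tendsto (fun z : ℂ ↦ z) (𝓝[≠] 0) (𝓝 0) := nhdsWithin_le_nhds
  have hF0 : Tendsto F (𝓝[≠] 0) (𝓝 0) := hF.isBigO.trans_tendsto hid
  have hdiff : DifferentiableOn ℂ F (L.lattice : Set ℂ)ᶜ := by
    intro x hx
    have hx' : ¬ InLattice τ x := (hmem x).not.mpr hx
    have h1 := differentiableAt_zetaTau hτ fun p _ ↦ ne_latticePoint_of_not_inLattice hx' p
    have h2 := (hasDerivAt_zetaSeries hτ hx').differentiableAt
    have hnhds := L.isClosed_lattice.isOpen_compl.mem_nhds hx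
    have h3 : DifferentiableAt ℂ (wp τ) x := by
      rw [wp_eq_weierstrassP τ hτ]
      exact L.differentiableOn_weierstrassP.differentiableAt hnhds
    have h4 : DifferentiableAt ℂ (wpd τ) x := by
      rw [wpd_eq_derivWeierstrassP τ hτ]
      exact L.differentiableOn_derivWeierstrassP.differentiableAt hnhds
    have h5 : DifferentiableAt ℂ (zetaTauFormula τ η) x := by
      unfold zetaTauFormula
      fun_prop
    exact (h1.sub h5).differentiableWithinAt
  obtain ⟨a, b, hab⟩ := L.exists_affine_of_quasiperiodic hdiff
    (fun l hl ↦ zetaTau_sub_formula_quasiperiodic hτ hη hl) hF0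
  have hev : F =ᶠ[𝓝[≠] 0] fun z ↦ a * z + b :=
    (L.eventually_notMem_lattice 0).mono hab
  have hb : b = 0 := by
    have : Tendsto (fun z ↦ a * z + b) (𝓝[≠] 0) (𝓝 (a * 0 + b)) :=
      (hid.const_mul a).add_const b
    simpa using tendsto_nhds_unique (this.congr' hev.symm) hF0
  have ha : a = 0 := by
    have h1 : Tendsto (fun z ↦ F z / z) (𝓝[≠] 0) (𝓝 0) := hF.tendsto_div_nhds_zero
    refine tendsto_nhds_unique (tendsto_const_nhds.congr' ?_) h1
    filter_upwards [hev, self_mem_nhdsWithin] with x hx (hx0 : x ≠ 0)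
    rw [hx, hb]
    field_simp
    simp
  have := hab z ((hmem z).not.mp hz)
  rw [ha, hb, zero_mul, zero_add] at this
  exact sub_eq_zero.mp this

/-- Lemma 2.3 (ii): the `τ`-derivative of `ζ(z|τ)`. -/
theorem tau_deriv_zeta
    (zeta : ℂ → ℂ → ℂ) (eta1 : ℂ → ℂ)
    (hzeta : IsWeierstrassZeta zeta) (heta1 : IsEta1 zeta eta1) :
    ∀ τ : ℂ, 0 < τ.im → ∀ z : ℂ, ¬ InLattice τ z →
    HasDerivAt (fun t => zeta t z)
      ((Complex.I / (4 * (Real.pi : ℂ))) *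
        (wpd τ z + 2 * (zeta τ z - z * eta1 τ) * wp τ z
          + 2 * eta1 τ * zeta τ z - (1 / 6) * z * g2 τ)) τ := by
  intro τ hτ z hz
  have hη (w : ℂ) (hw : ¬ InLattice τ w) : zetaSeries τ (w + 1) - zetaSeries τ w = eta1 τ := by
    rw [heta1 τ hτ w hw, hzeta.eq_zetaSeries hτ hw,
      hzeta.eq_zetaSeries hτ (by rwa [inLattice_add_one_iff])]
  have h := hasDerivAt_zetaSeries_tau hτ hz
  rw [zetaTau_eq_formula hτ hη hz, zetaTauFormula] at h
  rw [hzeta.eq_zetaSeries hτ hz]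
  refine h.congr_of_eventuallyEq ?_
  filter_upwards [eventually_not_inLattice hτ hz] with t ht
  exact hzeta.eq_zetaSeries ht.1 ht.2
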